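/- arXiv:1709.08658 — 9 statements merged into one kernel-verified Lean document; each statement's English description precedes it below -/
import Mathlib

section
/- Let ν ≥ 2 be an integer, t a coefficient vector of length n, and A a binary matrix with n columns whose rows are linearly independent over 𝔽₂ and form a (ν,t)-orthogonal set. Then for every subset K of the rows of A, the (ν,t)-norm of the mod-2 sum Σ_{r∈K} A_{r*} equals the sum of the (ν,t)-norms of the individual rows: ‖Σ_{r∈K} A_{r*} mod 2‖_{ν,t} ≡ Σ_{r∈K} ‖A_{r*}‖_{ν,t} (mod 2^ν). -/
open Finset

/-- The mod-2 sum (over `𝔽₂`, represented with integer entries in `{0,1}`)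
of the rows of `A` indexed by the finite set `K`. -/
def modTwoSum {ι κ : Type*} (A : ι → κ → ℤ) (K : Finset ι) : κ → ℤ :=
  fun c => (∑ r ∈ K, A r c) % 2

/-- Two binary vectors `v, w` are `(ν,t)`-orthogonal: `Σᵢ vᵢ wᵢ tᵢ ≡ 0 (mod 2^{ν−1})`. -/
def NuOrthoVec (ν : ℕ) {κ : Type*} [Fintype κ] (t v w : κ → ℤ) : Prop :=
  (2 ^ (ν - 1) : ℤ) ∣ ∑ i, v i * w i * t i

/-- The family of rows of `A` is a `(ν,t)`-orthogonal set: any two disjoint subsets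
of the rows span `(ν,t)`-orthogonal `𝔽₂`-subspaces; equivalently, the mod-2 sums of
any two disjoint subsets of rows are `(ν,t)`-orthogonal vectors. -/
def NuOrthoRows (ν : ℕ) {ι κ : Type*} [Fintype κ] (t : κ → ℤ) (A : ι → κ → ℤ) : Prop :=
  ∀ K K' : Finset ι, Disjoint K K' → NuOrthoVec ν t (modTwoSum A K) (modTwoSum A K')

/-- The rows of the integer `{0,1}`-matrix `A`, reduced modulo 2, are linearly
independent over `𝔽₂`. -/
def RowsLinIndepF2 {ι κ : Type*} (A : ι → κ → ℤ) : Prop :=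
  LinearIndependent (ZMod 2) (fun r : ι => fun c : κ => ((A r c : ℤ) : ZMod 2))

/-- Lemma on `(ν,t)`-orthogonality, (i) ⇒ (ii): if the rows of a binary
matrix `A` are `𝔽₂`-linearly independent and form a `(ν,t)`-orthogonal set, then for
every subset `K` of the rows, the `(ν,t)`-norm of the mod-2 sum of the rows in `K`
equals the sum of the individual `(ν,t)`-norms, modulo `2^ν`. -/
theorem stmt_2 (ν n m : ℕ) (hν : 2 ≤ ν)
    (t : Fin n → ℤ) (ht : ∀ i, Odd (t i))
    (A : Fin m → Fin n → ℤ) (hA01 : ∀ r i, A r i = 0 ∨ A r i = 1)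
    (hind : RowsLinIndepF2 A)
    (horth : NuOrthoRows ν t A) :
    ∀ K : Finset (Fin m),
      (∑ i, modTwoSum A K i * t i) ≡ (∑ r ∈ K, ∑ i, A r i * t i) [ZMOD (2 ^ ν)] := by
  intro K
  induction K using Finset.induction_on with
  | empty => simp [modTwoSum]
  | insert a K ha ih =>
    rw [Finset.sum_insert ha]
    have h1 : ∀ i, modTwoSum A (insert a K) i * t i
        = A a i * t i + modTwoSum A K i * t i
          - 2 * (modTwoSum A {a} i * modTwoSum A K i * t i) := by
      intro i
      have h2 : modTwoSum A (insert a K) i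
          = A a i + modTwoSum A K i - 2 * (modTwoSum A {a} i * modTwoSum A K i) := by
        simp only [modTwoSum, Finset.sum_insert ha, Finset.sum_singleton]
        generalize ∑ r ∈ K, A r i = s
        rcases hA01 a i with h | h <;> rw [h] <;> norm_num <;> omega
      rw [h2]; ring
    simp only [h1, Finset.sum_sub_distrib, Finset.sum_add_distrib, ← Finset.mul_sum]
    have h3 := horth {a} K (Finset.disjoint_singleton_left.mpr ha)
    obtain ⟨c, hc⟩ := h3
    rw [hc]
    obtain ⟨d, hd⟩ := ih.dvd
    apply (Int.modEq_iff_dvd).mpr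
    refine ⟨d + c, ?_⟩
    have hp : (2 : ℤ) ^ ν = 2 * 2 ^ (ν - 1) := by
      rw [← pow_succ']; congr 1; omega
    rw [mul_add, ← hd, hp]; ring
end

section
/- Let ν ≥ 2 be an integer, t a coefficient vector of length n, and A a binary matrix with n columns whose rows are linearly independent over 𝔽₂. Suppose that for every subset K of the rows of A one has ‖Σ_{r∈K} A_{r*} mod 2‖_{ν,t} ≡ Σ_{r∈K} ‖A_{r*}‖_{ν,t} (mod 2^ν). Then for every subset 𝔞 of the rows of A with 2 ≤ |𝔞| ≤ ν, one has 2^{|𝔞|−1} Σᵢ (∏_{a∈𝔞} A_{ai}) tᵢ ≡ 0 (mod 2^ν). -/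
open Finset

lemma prod_one_sub_two_mul {m : ℕ} (x : Fin m → ℤ) (hx : ∀ r, x r = 0 ∨ x r = 1)
    (K : Finset (Fin m)) : ∏ r ∈ K, (1 + (-2) * x r) = 1 - 2 * ((∑ r ∈ K, x r) % 2) := by
  classical
  induction K using Finset.induction_on with
  | empty => simp
  | insert r K hr ih =>
    rw [Finset.prod_insert hr, Finset.sum_insert hr, ih]
    rcases hx r with h | h <;> rw [h]
    · simp
    · rcases Int.emod_two_eq_zero_or_one (∑ r ∈ K, x r) with h2 | h2
      · have : (1 + ∑ r ∈ K, x r) % 2 = 1 := by omega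
        rw [h2, this]; norm_num
      · have : (1 + ∑ r ∈ K, x r) % 2 = 0 := by omega
        rw [h2, this]; norm_num

lemma mod_two_expand {m : ℕ} (x : Fin m → ℤ) (hx : ∀ r, x r = 0 ∨ x r = 1)
    (K : Finset (Fin m)) :
    (∑ r ∈ K, x r) % 2 =
      ∑ S ∈ K.powerset, (if S.card = 0 then 0 else (-2) ^ (S.card - 1)) * ∏ r ∈ S, x r := by
  classical
  have h1 := prod_one_sub_two_mul x hx K
  rw [Finset.prod_one_add] at h1
  have h2 : ∑ S ∈ K.powerset, ∏ r ∈ S, (-2) * x r = 1 + (-2) *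
      ∑ S ∈ K.powerset, (if S.card = 0 then 0 else (-2) ^ (S.card - 1)) * ∏ r ∈ S, x r := by
    have h3 : (1 : ℤ) = ∑ S ∈ K.powerset, if S = ∅ then 1 else 0 := by
      rw [Finset.sum_ite_eq']; simp
    rw [h3, Finset.mul_sum, ← Finset.sum_add_distrib]
    refine Finset.sum_congr rfl fun S _ => ?_
    rw [Finset.prod_mul_distrib, Finset.prod_const]
    by_cases hS : S = ∅
    · simp [hS]
    · have hc : S.card ≠ 0 := by simpa using hS
      obtain ⟨k, hk⟩ := Nat.exists_eq_succ_of_ne_zero hc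
      simp only [hS, hk, if_false]
      simp [pow_succ]
      ring
  linarith

/-- Lemma on `(ν,t)`-orthogonality, (ii) ⇒ (iii): if for every subset `K`
of the `𝔽₂`-linearly independent rows of a binary matrix `A` the `(ν,t)`-norm of the
mod-2 sum of the rows in `K` equals the sum of the individual `(ν,t)`-norms modulo
`2^ν`, then for every subset `𝔞` of the rows with `2 ≤ |𝔞| ≤ ν` one has
`2^{|𝔞|−1} Σᵢ (∏_{a∈𝔞} A_{ai}) tᵢ ≡ 0 (mod 2^ν)`. -/
theorem stmt_3 (ν n m : ℕ) (hν : 2 ≤ ν)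
    (t : Fin n → ℤ) (ht : ∀ i, Odd (t i))
    (A : Fin m → Fin n → ℤ) (hA01 : ∀ r i, A r i = 0 ∨ A r i = 1)
    (hind : RowsLinIndepF2 A)
    (hsum : ∀ K : Finset (Fin m),
      (∑ i, modTwoSum A K i * t i) ≡ (∑ r ∈ K, ∑ i, A r i * t i) [ZMOD (2 ^ ν)]) :
    ∀ a : Finset (Fin m), 2 ≤ a.card → a.card ≤ ν →
      (2 ^ ν : ℤ) ∣ 2 ^ (a.card - 1) * ∑ i, (∏ r ∈ a, A r i) * t i := by
  intro a h2 _
  classical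
  set c : Finset (Fin m) → ℤ := fun S => ∑ i, (∏ r ∈ S, A r i) * t i with hc
  set e : Finset (Fin m) → ℤ := fun S => if S.card = 0 then 0 else (-2) ^ (S.card - 1) with he
  have hexp : ∀ K, ∑ i, modTwoSum A K i * t i = ∑ S ∈ K.powerset, e S * c S := by
    intro K
    simp only [modTwoSum, hc, Finset.mul_sum]
    rw [Finset.sum_comm]
    refine Finset.sum_congr rfl fun i _ => ?_
    rw [mod_two_expand (fun r => A r i) (fun r => hA01 r i) K, Finset.sum_mul]
    exact Finset.sum_congr rfl fun S _ => mul_assoc _ _ _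
  have hone : ∀ K : Finset (Fin m), ∑ r ∈ K, ∑ i, A r i * t i
      = ∑ S ∈ K.powerset, if S.card = 1 then e S * c S else 0 := by
    intro K
    rw [← Finset.sum_filter, ← Finset.powersetCard_eq_filter, Finset.powersetCard_one,
      Finset.sum_map]
    simp [he, hc]
  have hdiv : ∀ K : Finset (Fin m), (2 ^ ν : ℤ) ∣
      ∑ S ∈ K.powerset, if 2 ≤ S.card then e S * c S else 0 := by
    intro K
    have h := (hsum K).symm.dvd
    rw [hexp, hone, ← Finset.sum_sub_distrib] at h
    convert h using 1
    refine Finset.sum_congr rfl fun S _ => ?_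
    rcases Nat.lt_or_ge S.card 2 with h | h
    · rcases (by omega : S.card = 0 ∨ S.card = 1) with hS | hS
      · have heS : e S = 0 := by simp only [he]; rw [if_pos hS]
        rw [heS]; simp
      · simp [hS]
    · have h1 : S.card ≠ 1 := by omega
      simp [h, h1]
  have key : ∀ K : Finset (Fin m), 2 ≤ K.card → (2 ^ ν : ℤ) ∣ e K * c K := by
    intro K
    induction K using Finset.strongInduction with
    | H K ih =>
      intro hK
      have h := hdiv K
      rw [← Finset.add_sum_erase _ _ (Finset.mem_powerset_self K), if_pos hK] at h
      refine (Int.dvd_add_left (Finset.dvd_sum fun S hS => ?_)).1 h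
      rw [Finset.mem_erase, Finset.mem_powerset] at hS
      split_ifs with h2
      · exact ih S (Finset.ssubset_iff_subset_ne.2 ⟨hS.2, hS.1⟩) h2
      · exact dvd_zero _
  have h := key a h2
  have h0 : a.card ≠ 0 := by omega
  simp only [he, h0, if_false] at h
  rw [neg_pow, mul_assoc] at h
  rcases neg_one_pow_eq_or ℤ (a.card - 1) with h1 | h1 <;> rw [h1] at h
  · simpa using h
  · simpa using h
end

section
/- Let ν ≥ 2 be an integer, t a coefficient vector of length n, and A a binary matrix with n columns whose rows are linearly independent over 𝔽₂. Suppose that for every subset 𝔞 of the rows of A with 2 ≤ |𝔞| ≤ ν one has 2^{|𝔞|−1} Σᵢ (∏_{a∈𝔞} A_{ai}) tᵢ ≡ 0 (mod 2^ν). Then the rows of A form a (ν,t)-orthogonal set: for any two disjoint subsets K, K′ of rows, the vectors v = Σ_{r∈K} A_{r*} mod 2 and w = Σ_{r∈K′} A_{r*} mod 2 satisfy Σᵢ vᵢ wᵢ tᵢ ≡ 0 (mod 2^{ν−1}). -/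
open Finset

theorem two_mul_modTwoSum {m n : ℕ} (A : Fin m → Fin n → ℤ)
    (hA01 : ∀ r i, A r i = 0 ∨ A r i = 1) (K : Finset (Fin m)) (i : Fin n) :
    2 * modTwoSum A K i = 1 - ∏ r ∈ K, (1 + (-2) * A r i) := by
  unfold modTwoSum
  induction K using Finset.induction_on with
  | empty => simp
  | insert a s ha ih =>
    rw [Finset.sum_insert ha, Finset.prod_insert ha]
    have hP : ∏ r ∈ s, (1 + (-2) * A r i) = 1 - 2 * ((∑ r ∈ s, A r i) % 2) := by
      linarith
    rw [hP]
    rcases hA01 a i with h | h <;> rw [h] <;> omega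

theorem two_mul_modTwoSum' {m n : ℕ} (A : Fin m → Fin n → ℤ)
    (hA01 : ∀ r i, A r i = 0 ∨ A r i = 1) (K : Finset (Fin m)) (i : Fin n) :
    2 * modTwoSum A K i = - ∑ S ∈ K.powerset.erase ∅, ∏ r ∈ S, ((-2) * A r i) := by
  rw [two_mul_modTwoSum A hA01, Finset.prod_one_add,
    ← Finset.add_sum_erase _ _ (Finset.empty_mem_powerset K)]
  simp

/-- Lemma on `(ν,t)`-orthogonality, (iii) ⇒ (i): if for every subset `𝔞`
of the `𝔽₂`-linearly independent rows of a binary matrix `A` with `2 ≤ |𝔞| ≤ ν` one has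
`2^{|𝔞|−1} Σᵢ (∏_{a∈𝔞} A_{ai}) tᵢ ≡ 0 (mod 2^ν)`, then the rows of `A` form a
`(ν,t)`-orthogonal set: for any two disjoint subsets `K, K′` of rows, the mod-2 sums
`v = Σ_{r∈K} A_{r*}` and `w = Σ_{r∈K′} A_{r*}` satisfy `Σᵢ vᵢ wᵢ tᵢ ≡ 0 (mod 2^{ν−1})`. -/
theorem stmt_4 (ν n m : ℕ) (hν : 2 ≤ ν)
    (t : Fin n → ℤ) (ht : ∀ i, Odd (t i))
    (A : Fin m → Fin n → ℤ) (hA01 : ∀ r i, A r i = 0 ∨ A r i = 1)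
    (hind : RowsLinIndepF2 A)
    (hdiv : ∀ a : Finset (Fin m), 2 ≤ a.card → a.card ≤ ν →
      (2 ^ ν : ℤ) ∣ 2 ^ (a.card - 1) * ∑ i, (∏ r ∈ a, A r i) * t i) :
    ∀ K K' : Finset (Fin m), Disjoint K K' →
      (2 ^ (ν - 1) : ℤ) ∣ ∑ i, modTwoSum A K i * modTwoSum A K' i * t i := by
  intro K K' hK
  have key : (4 : ℤ) * ∑ i, modTwoSum A K i * modTwoSum A K' i * t i =
      ∑ S ∈ K.powerset.erase ∅, ∑ S' ∈ K'.powerset.erase ∅,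
        (-2) ^ (S ∪ S').card * ∑ i, (∏ r ∈ S ∪ S', A r i) * t i := by
    have h1 : (4 : ℤ) * ∑ i, modTwoSum A K i * modTwoSum A K' i * t i =
        ∑ i, ∑ S ∈ K.powerset.erase ∅, ∑ S' ∈ K'.powerset.erase ∅,
          (∏ r ∈ S, ((-2) * A r i)) * (∏ r ∈ S', ((-2) * A r i)) * t i := by
      rw [Finset.mul_sum]
      refine Finset.sum_congr rfl fun i _ => ?_
      have e : (4 : ℤ) * (modTwoSum A K i * modTwoSum A K' i * t i) =
        (2 * modTwoSum A K i) * (2 * modTwoSum A K' i) * t i := by ring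
      rw [e, two_mul_modTwoSum' A hA01, two_mul_modTwoSum' A hA01, neg_mul_neg,
        Finset.sum_mul_sum, Finset.sum_mul]
      exact Finset.sum_congr rfl fun S _ => Finset.sum_mul _ _ _
    rw [h1, Finset.sum_comm]
    refine Finset.sum_congr rfl fun S hS => ?_
    rw [Finset.sum_comm]
    refine Finset.sum_congr rfl fun S' hS' => ?_
    rw [Finset.mul_sum]
    refine Finset.sum_congr rfl fun i _ => ?_
    have hd : Disjoint S S' := hK.mono
      (Finset.mem_powerset.1 (Finset.mem_of_mem_erase hS))
      (Finset.mem_powerset.1 (Finset.mem_of_mem_erase hS'))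
    rw [← Finset.prod_union hd, Finset.prod_mul_distrib, Finset.prod_const, mul_assoc]
  have hdvd : (2 ^ (ν + 1) : ℤ) ∣ 4 * ∑ i, modTwoSum A K i * modTwoSum A K' i * t i := by
    rw [key]
    refine Finset.dvd_sum fun S hS => Finset.dvd_sum fun S' hS' => ?_
    have hd : Disjoint S S' := hK.mono
      (Finset.mem_powerset.1 (Finset.mem_of_mem_erase hS))
      (Finset.mem_powerset.1 (Finset.mem_of_mem_erase hS'))
    have c1 : 0 < S.card := Finset.card_pos.2
      (Finset.nonempty_iff_ne_empty.2 (Finset.ne_of_mem_erase hS))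
    have c2 : 0 < S'.card := Finset.card_pos.2
      (Finset.nonempty_iff_ne_empty.2 (Finset.ne_of_mem_erase hS'))
    have hc := Finset.card_union_of_disjoint hd
    rw [neg_pow, mul_assoc]
    apply Dvd.dvd.mul_left
    rcases le_or_gt (S ∪ S').card ν with h | h
    · have h3 := mul_dvd_mul_left (2 : ℤ) (hdiv (S ∪ S') (by omega) h)
      obtain ⟨c, hc'⟩ : ∃ c, (S ∪ S').card = c + 1 := ⟨(S ∪ S').card - 1, by omega⟩
      rw [hc', Nat.add_sub_cancel, ← mul_assoc, ← pow_succ', ← pow_succ'] at h3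
      rw [hc']
      exact h3
    · exact Dvd.dvd.mul_right (pow_dvd_pow 2 h) _
  have e : (2 ^ (ν + 1) : ℤ) = 4 * 2 ^ (ν - 1) := by
    obtain ⟨c, rfl⟩ : ∃ c, ν = c + 1 := ⟨ν - 1, by omega⟩
    rw [Nat.add_sub_cancel]
    ring
  rw [e] at hdvd
  exact (mul_dvd_mul_iff_left (by norm_num)).1 hdvd
end

section
/- Let ν ≥ 2 be an integer, t a coefficient vector of length n, and let g_1, …, g_k be binary vectors of length n spanning an 𝔽₂-subspace 𝒮 ⊆ 𝔽₂^n. Then every vector of 𝒮 has (ν,t)-norm zero if and only if the set {g_1, …, g_k} is (ν,t)-null, i.e., the set is (ν,t)-orthogonal and each g_j has (ν,t)-norm zero. -/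
open Finset

theorem stmt_5_union {n k : ℕ} (g : Fin k → Fin n → ℤ) (t : Fin n → ℤ)
    (K K' : Finset (Fin k)) (hd : Disjoint K K') :
    ∑ i, modTwoSum g (K ∪ K') i * t i =
      ∑ i, modTwoSum g K i * t i + ∑ i, modTwoSum g K' i * t i
        - 2 * ∑ i, modTwoSum g K i * modTwoSum g K' i * t i := by
  rw [Finset.mul_sum, ← Finset.sum_add_distrib, ← Finset.sum_sub_distrib]
  refine Finset.sum_congr rfl fun i _ => ?_
  have key : modTwoSum g (K ∪ K') i =
      modTwoSum g K i + modTwoSum g K' i - 2 * (modTwoSum g K i * modTwoSum g K' i) := by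
    simp only [modTwoSum, Finset.sum_union hd]
    generalize ∑ r ∈ K, g r i = a
    generalize ∑ r ∈ K', g r i = b
    rcases Int.emod_two_eq_zero_or_one a with h | h <;>
      rcases Int.emod_two_eq_zero_or_one b with h' | h' <;> rw [h, h'] <;> omega
  rw [key]
  ring

/-- For binary vectors `g_1, …, g_k` spanning an `𝔽₂`-subspace
`𝒮 ⊆ 𝔽₂^n` (whose elements are exactly the mod-2 sums of subsets of the `g_j`),
every vector of `𝒮` has `(ν,t)`-norm zero if and only if the set
`{g_1, …, g_k}` is `(ν,t)`-null, i.e., it is `(ν,t)`-orthogonal and every `g_j`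
has `(ν,t)`-norm zero. -/
theorem stmt_5 (ν n k : ℕ) (hν : 2 ≤ ν)
    (t : Fin n → ℤ) (ht : ∀ i, Odd (t i))
    (g : Fin k → Fin n → ℤ) (hg01 : ∀ j i, g j i = 0 ∨ g j i = 1) :
    (∀ J : Finset (Fin k), (2 ^ ν : ℤ) ∣ ∑ i, modTwoSum g J i * t i)
      ↔ (NuOrthoRows ν t g ∧ ∀ j, (2 ^ ν : ℤ) ∣ ∑ i, g j i * t i) := by
  have hs : ∀ j, modTwoSum g {j} = g j := by
    intro j
    funext i
    rcases hg01 j i with h | h <;> simp [modTwoSum, h]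
  have h2 : (2 : ℤ) ^ ν = 2 * 2 ^ (ν - 1) := by
    rw [← pow_succ']
    congr 1
    omega
  constructor
  · intro h
    refine ⟨?_, fun j => by simpa [hs] using h {j}⟩
    intro K K' hd
    have h3 : (2 ^ ν : ℤ) ∣ 2 * ∑ i, modTwoSum g K i * modTwoSum g K' i * t i := by
      have e := stmt_5_union g t K K' hd
      have := dvd_sub (dvd_add (h K) (h K')) (h (K ∪ K'))
      rw [e] at this
      rwa [sub_sub_cancel] at this
    rw [h2] at h3
    exact (mul_dvd_mul_iff_left two_ne_zero).1 h3
  · rintro ⟨ho, hn⟩ J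
    induction J using Finset.induction_on with
    | empty => simp [modTwoSum]
    | insert a s ha ih =>
      have hd : Disjoint ({a} : Finset (Fin k)) s := by simpa using ha
      rw [Finset.insert_eq, stmt_5_union g t _ _ hd]
      refine dvd_sub (dvd_add ?_ ih) ?_
      · rw [hs]
        exact hn a
      · rw [h2]
        exact mul_dvd_mul_left 2 (ho _ _ hd)
end

section
/- Let S be an r×n binary matrix and L a k×n binary matrix such that the rows of the stacked matrix G = [L; S] are linearly independent over 𝔽₂, and over 𝔽₂ one has S Sᵀ = 0, S Lᵀ = 0, and L Lᵀ = I. Then there exists a coefficient vector t ∈ ℤ^n (all entries odd) such that Σᵢ S_{ai} tᵢ ≡ 0 (mod 4) for every row a of S and Σᵢ L_{bi} tᵢ ≡ 1 (mod 4) for every row b of L; consequently the rows of G form a (2,t)-orthogonal set, the rows of L are (2,t)-orthonormal, and the rows of S are (2,t)-null. -/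
open Finset

lemma nuOrthoRows_two_of {ι κ : Type*} [Fintype κ] (t : κ → ℤ) (A : ι → κ → ℤ)
    (ht : ∀ i, Odd (t i)) (hA : ∀ j j', j ≠ j' → (2 : ℤ) ∣ ∑ i, A j i * A j' i) :
    NuOrthoRows 2 t A := by
  intro K K' hK
  have hmod : ∀ z : ℤ, ((z % 2 : ℤ) : ZMod 2) = (z : ZMod 2) := fun z => by
    have := ZMod.intCast_mod z 2
    simpa using this
  have ht' : ∀ i, ((t i : ℤ) : ZMod 2) = 1 := fun i => by
    obtain ⟨m, hm⟩ := ht i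
    have h2 : (2 : ZMod 2) = 0 := by decide
    rw [hm]; push_cast; rw [h2]; ring
  have hA' : ∀ j j', j ≠ j' → ∑ i, (A j i : ZMod 2) * (A j' i : ZMod 2) = 0 := by
    intro j j' h
    have := (ZMod.intCast_zmod_eq_zero_iff_dvd (∑ i, A j i * A j' i) 2).2 (by exact_mod_cast hA j j' h)
    simpa using this
  have key : (((∑ i, modTwoSum A K i * modTwoSum A K' i * t i : ℤ)) : ZMod 2) = 0 := by
    simp only [modTwoSum, Int.cast_sum, Int.cast_mul, hmod, ht', mul_one]
    simp_rw [Finset.sum_mul_sum]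
    rw [Finset.sum_comm]
    refine Finset.sum_eq_zero fun j hj => ?_
    rw [Finset.sum_comm]
    refine Finset.sum_eq_zero fun j' hj' => ?_
    exact hA' j j' fun h => Finset.disjoint_left.1 hK hj (h ▸ hj')
  have := (ZMod.intCast_zmod_eq_zero_iff_dvd _ 2).1 key
  simpa [NuOrthoVec] using this

lemma exists_sol {ι κ : Type*} [Fintype ι] [Fintype κ] (A : ι → κ → ℤ)
    (hA : RowsLinIndepF2 A) (m : ι → ℤ) :
    ∃ x : κ → ℤ, ∀ j, (2 : ℤ) ∣ m j + ∑ i, A j i * x i := by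
  classical
  let M : Matrix ι κ (ZMod 2) := Matrix.of fun j i => (A j i : ZMod 2)
  have hr : M.rank = Fintype.card ι := LinearIndependent.rank_matrix (M := M) hA
  have htop : LinearMap.range M.mulVecLin = ⊤ := by
    apply Submodule.eq_top_of_finrank_eq
    rw [Module.finrank_fintype_fun_eq_card]
    exact hr
  obtain ⟨y, hy⟩ := LinearMap.range_eq_top.1 htop (fun j => -(m j : ZMod 2))
  refine ⟨fun i => ((y i).val : ℤ), fun j => ?_⟩
  have := congrFun hy j
  have h0 : ((m j + ∑ i, A j i * ((y i).val : ℤ) : ℤ) : ZMod 2) = 0 := by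
    simp only [Matrix.mulVecLin_apply, Matrix.mulVec, dotProduct, M, Matrix.of_apply] at this
    simp [this, CharTwo.add_self_eq_zero]
  exact_mod_cast (ZMod.intCast_zmod_eq_zero_iff_dvd _ 2).1 h0

/-- Let `S` (r×n) and `L` (k×n) be binary matrices whose stacked rows
`G = [L; S]` are `𝔽₂`-linearly independent, with `S Sᵀ = 0`, `S Lᵀ = 0`, `L Lᵀ = I`
over `𝔽₂`. Then there is a coefficient vector `t` (all entries odd) with
`Σᵢ S_{ai} tᵢ ≡ 0 (mod 4)` and `Σᵢ L_{bi} tᵢ ≡ 1 (mod 4)`; consequently the rows of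
`G` are `(2,t)`-orthogonal, those of `L` are `(2,t)`-orthonormal, and those of `S`
are `(2,t)`-null. -/
theorem stmt_7 (n r k : ℕ)
    (S : Fin r → Fin n → ℤ) (L : Fin k → Fin n → ℤ)
    (hS01 : ∀ a i, S a i = 0 ∨ S a i = 1)
    (hL01 : ∀ b i, L b i = 0 ∨ L b i = 1)
    (hind : RowsLinIndepF2 (Sum.elim L S))
    (hSS : ∀ a b, (2 : ℤ) ∣ ∑ i, S a i * S b i)
    (hSL : ∀ a b, (2 : ℤ) ∣ ∑ i, S a i * L b i)
    (hLL : ∀ b b', (2 : ℤ) ∣ ((∑ i, L b i * L b' i) - if b = b' then 1 else 0)) :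
    ∃ t : Fin n → ℤ,
      (∀ i, Odd (t i)) ∧
      (∀ a, (4 : ℤ) ∣ ∑ i, S a i * t i) ∧
      (∀ b, (4 : ℤ) ∣ ((∑ i, L b i * t i) - 1)) ∧
      NuOrthoRows 2 t (Sum.elim L S) ∧
      (NuOrthoRows 2 t L ∧ ∀ b, (2 ^ 2 : ℤ) ∣ ((∑ i, L b i * t i) - 1)) ∧
      (NuOrthoRows 2 t S ∧ ∀ a, (2 ^ 2 : ℤ) ∣ ∑ i, S a i * t i) := by
  have hSsq : ∀ a i, S a i * S a i = S a i := fun a i => by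
    rcases hS01 a i with h | h <;> simp [h]
  have hLsq : ∀ a i, L a i * L a i = L a i := fun a i => by
    rcases hL01 a i with h | h <;> simp [h]
  have hS1 : ∀ a, ∃ m : ℤ, ∑ i, S a i = 2 * m := fun a => by
    have := hSS a a
    simp only [hSsq] at this
    exact this
  have hL1 : ∀ b, ∃ m : ℤ, ∑ i, L b i - 1 = 2 * m := fun b => by
    have := hLL b b
    simp only [hLsq, if_true] at this
    exact this
  choose mS hmS using hS1
  choose mL hmL using hL1
  obtain ⟨x, hx⟩ := exists_sol (Sum.elim L S) hind (Sum.elim mL mS)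
  have hexp : ∀ v : Fin n → ℤ, ∑ i, v i * (1 + 2 * x i) = ∑ i, v i + 2 * ∑ i, v i * x i := by
    intro v
    rw [Finset.mul_sum, ← Finset.sum_add_distrib]
    exact Finset.sum_congr rfl fun i _ => by ring
  have hodd : ∀ i, Odd (1 + 2 * x i) := fun i => ⟨x i, by ring⟩
  have hS4 : ∀ a, (4 : ℤ) ∣ ∑ i, S a i * (1 + 2 * x i) := fun a => by
    have h := hx (Sum.inr a)
    simp only [Sum.elim_inr] at h
    have h1 := hmS a
    rw [hexp]
    omega
  have hL4 : ∀ b, (4 : ℤ) ∣ (∑ i, L b i * (1 + 2 * x i)) - 1 := fun b => by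
    have h := hx (Sum.inl b)
    simp only [Sum.elim_inl] at h
    have h1 := hmL b
    rw [hexp]
    omega
  have hLL' : ∀ b b', b ≠ b' → (2 : ℤ) ∣ ∑ i, L b i * L b' i := fun b b' h => by
    simpa [h] using hLL b b'
  refine ⟨fun i => 1 + 2 * x i, hodd, hS4, hL4, nuOrthoRows_two_of _ _ hodd ?_,
    ⟨nuOrthoRows_two_of _ _ hodd hLL', by simpa using hL4⟩,
    ⟨nuOrthoRows_two_of _ _ hodd fun a b _ => hSS a b, by simpa using hS4⟩⟩
  rintro (b | a) (b' | a') h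
  · exact hLL' b b' fun e => h (by rw [e])
  · simpa [mul_comm] using hSL a' b
  · exact hSL a b'
  · exact hSS a a'
end

section
/- Fix integers ν ≥ 2, n_out ≥ 1, n_c ≥ 1. For each α = 1,…,n_c let L^{(α)} be an n_out × n_α binary matrix, S^{(α)} an r_α × n_α binary matrix, and t^{(α)} ∈ ℤ^{n_α} a coefficient vector, such that: the rows of G^{(α)} = [L^{(α)}; S^{(α)}] form a (ν,t^{(α)})-orthogonal set; the rows of S^{(α)} are 𝔽₂-linearly independent and (ν,t^{(α)})-null; the set of nonzero rows of L^{(α)} is (ν,t^{(α)})-orthonormal; and Σ_k Σᵢ L^{(α)}_{ki} t^{(α)}ᵢ ≡ Σᵢ t^{(α)}ᵢ (mod 2^ν). Let M be the n_c × n_out binary matrix with M_{αk} = 1 iff row k of L^{(α)} is nonzero. Index columns by one block of size n_out followed by, for each α, a block of size 2n_α split into two halves. Define the binary matrix 𝔠 with rows: (𝔠_ℓ) for k = 1,…,n_out, the row with a 1 in position k of the first block and, in each block α, both halves equal to the k-th row of L^{(α)}; (𝔠_out) for α = 1,…,n_c, the row whose first block is M_{α*}, whose block β for β < α has both halves equal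 to Σ_k M_{αk} L^{(β)}_{k*} mod 2, whose block α has first half all-ones and second half zero, and which is zero in blocks β > α; (𝔠_in) for each α and each row s of S^{(α)}, the row which is zero outside block α and whose block α has both halves equal to S^{(α)}_{s*}. Then there exists a coefficient vector t ∈ ℤ^{n_out + Σ_α 2n_α} (all entries odd) such that the rows of 𝔠 form a (ν+1,t)-orthogonal set, the rows of 𝔠_ℓ are (ν+1,t)-orthonormal, the rows of 𝔠_out and of 𝔠_in are (ν+1,t)-null, and Σ_k Σᵢ (𝔠_ℓ)_{ki} tᵢ ≡ Σᵢ tᵢ (mod 2^{ν+1}). -/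
open Finset

/-- Column index type for the lifted matrix: one block of size `n_out`, followed by,
for each `α`, a block of size `2 n_α` split into two halves (indexed by `Bool`,
`false` = first half, `true` = second half). -/
abbrev LiftCol (nout nc : ℕ) (na : Fin nc → ℕ) :=
  Fin nout ⊕ (Σ α : Fin nc, Bool × Fin (na α))

/-- The `n_c × n_out` binary matrix `M` with `M_{αk} = 1` iff row `k` of `L^{(α)}`
is nonzero. -/
def Mmat {nout nc : ℕ} {na : Fin nc → ℕ}
    (L : (α : Fin nc) → Fin nout → Fin (na α) → ℤ) : Fin nc → Fin nout → ℤ :=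
  fun α k => if L α k = 0 then 0 else 1

/-- Row `k` of the block `𝔠_ℓ`: a `1` in position `k` of the first block and, in
each block `α`, both halves equal to the `k`-th row of `L^{(α)}`. -/
def rowEll {nout nc : ℕ} {na : Fin nc → ℕ}
    (L : (α : Fin nc) → Fin nout → Fin (na α) → ℤ) (k : Fin nout) :
    LiftCol nout nc na → ℤ :=
  fun c => match c with
  | Sum.inl k' => if k' = k then 1 else 0
  | Sum.inr ⟨α, _, i⟩ => L α k i

/-- Row `α` of the block `𝔠_out`: first block `M_{α*}`; block `β < α` has both halves
equal to `Σ_k M_{αk} L^{(β)}_{k*} mod 2`; block `α` has first half all-ones and second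
half zero; blocks `β > α` are zero. -/
def rowOut {nout nc : ℕ} {na : Fin nc → ℕ}
    (L : (α : Fin nc) → Fin nout → Fin (na α) → ℤ) (α : Fin nc) :
    LiftCol nout nc na → ℤ :=
  fun c => match c with
  | Sum.inl k => Mmat L α k
  | Sum.inr ⟨β, h, i⟩ =>
    if β < α then (∑ k, Mmat L α k * L β k i) % 2
    else if β = α then (if h = false then 1 else 0)
    else 0

/-- Row `(α, s)` of the block `𝔠_in`: zero outside block `α`, and block `α` has both
halves equal to the row `S^{(α)}_{s*}`. -/
def rowIn {nout nc : ℕ} {na ra : Fin nc → ℕ}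
    (S : (α : Fin nc) → Fin (ra α) → Fin (na α) → ℤ)
    (α : Fin nc) (s : Fin (ra α)) :
    LiftCol nout nc na → ℤ :=
  fun c => match c with
  | Sum.inl _ => 0
  | Sum.inr ⟨β, _, i⟩ =>
    if h : β = α then S α s (Fin.cast (congrArg na h) i) else 0

/-- The full lifted matrix `𝔠`, with rows `𝔠_ℓ`, `𝔠_out`, `𝔠_in`. -/
def liftMatrix {nout nc : ℕ} {na ra : Fin nc → ℕ}
    (L : (α : Fin nc) → Fin nout → Fin (na α) → ℤ)
    (S : (α : Fin nc) → Fin (ra α) → Fin (na α) → ℤ) :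
    (Fin nout ⊕ Fin nc ⊕ (Σ α : Fin nc, Fin (ra α))) → LiftCol nout nc na → ℤ :=
  Sum.elim (rowEll L) (Sum.elim (rowOut L) (fun p => rowIn S p.1 p.2))


lemma dvd_conv {d a b : ℤ} (h : d ∣ a) (e : b = a) : d ∣ b := e ▸ h

lemma mts_01 {ι κ : Type*} (A : ι → κ → ℤ) (K : Finset ι) (c : κ) :
    modTwoSum A K c = 0 ∨ modTwoSum A K c = 1 := Int.emod_two_eq_zero_or_one _

lemma xor_formula {a b : ℤ} (ha : a = 0 ∨ a = 1) (hb : b = 0 ∨ b = 1) :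
    (a + b) % 2 = a + b - 2 * (a * b) := by
  rcases ha with rfl | rfl <;> rcases hb with rfl | rfl <;> norm_num

lemma mts_union {ι κ : Type*} [DecidableEq ι] (A : ι → κ → ℤ) (K K' : Finset ι)
    (h : Disjoint K K') (c : κ) :
    modTwoSum A (K ∪ K') c = modTwoSum A K c + modTwoSum A K' c
      - 2 * (modTwoSum A K c * modTwoSum A K' c) := by
  rw [← xor_formula (mts_01 A K c) (mts_01 A K' c)]
  unfold modTwoSum
  rw [Finset.sum_union h, ← Int.add_emod]

lemma norm_add {ν : ℕ} (hν : 2 ≤ ν) {ι κ : Type*} [DecidableEq ι] [Fintype κ] (t : κ → ℤ)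
    (A : ι → κ → ℤ) (hA : NuOrthoRows ν t A) (K K' : Finset ι) (h : Disjoint K K') :
    (2 ^ ν : ℤ) ∣ (∑ i, modTwoSum A (K ∪ K') i * t i)
      - ((∑ i, modTwoSum A K i * t i) + ∑ i, modTwoSum A K' i * t i) := by
  obtain ⟨z, hz⟩ := hA K K' h
  obtain ⟨μ, rfl⟩ : ∃ μ, ν = μ + 1 := ⟨ν - 1, by omega⟩
  refine ⟨-z, ?_⟩
  simp only [Nat.add_sub_cancel] at hz
  have : (∑ i, modTwoSum A (K ∪ K') i * t i) = (∑ i, modTwoSum A K i * t i) +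
      (∑ i, modTwoSum A K' i * t i) - 2 * ∑ i, modTwoSum A K i * modTwoSum A K' i * t i := by
    rw [Finset.mul_sum, ← Finset.sum_add_distrib, ← Finset.sum_sub_distrib]
    refine Finset.sum_congr rfl fun i _ => ?_
    rw [mts_union A K K' h]; ring
  rw [this, hz]; ring

lemma norm_sum {ν : ℕ} (hν : 2 ≤ ν) {ι κ : Type*} [DecidableEq ι] [Fintype κ] (t : κ → ℤ)
    (A : ι → κ → ℤ) (hA01 : ∀ r c, A r c = 0 ∨ A r c = 1)
    (hA : NuOrthoRows ν t A) (w : ι → ℤ)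
    (hw : ∀ r, (2 ^ ν : ℤ) ∣ (∑ i, A r i * t i) - w r) (K : Finset ι) :
    (2 ^ ν : ℤ) ∣ (∑ i, modTwoSum A K i * t i) - ∑ r ∈ K, w r := by
  induction K using Finset.induction_on with
  | empty => simp [modTwoSum]
  | insert r K hr ih =>
    have h1 := norm_add hν t A hA {r} K (by simpa using hr)
    have h2 : ∀ i, modTwoSum A {r} i = A r i := by
      intro i
      rcases hA01 r i with h | h <;> simp [modTwoSum, h]
    simp only [h2] at h1
    rw [← Finset.insert_eq] at h1
    rw [Finset.sum_insert hr]
    have := dvd_add (dvd_add h1 ih) (hw r)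
    refine dvd_conv this ?_; ring

lemma inner_mts_sum {ν : ℕ} (hν : 2 ≤ ν) {ι κ : Type*} [DecidableEq ι] [Fintype κ] (t : κ → ℤ)
    (A : ι → κ → ℤ) (hA : NuOrthoRows ν t A) (K K' : Finset ι) :
    (2 ^ (ν - 1) : ℤ) ∣ (∑ i, modTwoSum A K i * modTwoSum A K' i * t i)
      - ∑ i, modTwoSum A (K ∩ K') i * t i := by
  have d1 : Disjoint (K \ K') (K' \ K) := by
    rw [Finset.disjoint_left]; simp; tauto
  have d2 : Disjoint (K \ K') (K ∩ K') := by
    rw [Finset.disjoint_left]; simp; tauto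
  have d3 : Disjoint (K' \ K) (K ∩ K') := by
    rw [Finset.disjoint_left]; simp; tauto
  have h := dvd_sub (dvd_sub (hA _ _ d1) (hA _ _ d2)) (hA _ _ d3)
  have e1 : K = (K \ K') ∪ (K ∩ K') := by ext; simp; tauto
  have e2 : K' = (K' \ K) ∪ (K ∩ K') := by ext; simp; tauto
  refine dvd_conv h ?_
  simp only [← Finset.sum_sub_distrib]
  refine Finset.sum_congr rfl fun i _ => ?_
  have f1 := mts_union A _ _ d2 i
  have f2 := mts_union A _ _ d3 i
  rw [← e1] at f1
  rw [← e2] at f2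
  rw [f1, f2]
  rcases mts_01 A (K ∩ K') i with hu | hu <;> rw [hu] <;> ring

lemma block_lemma {ν : ℕ} (hν : 2 ≤ ν) {ι κ : Type*} [DecidableEq ι] [Fintype κ] (t : κ → ℤ)
    (A : ι → κ → ℤ) (hA01 : ∀ r c, A r c = 0 ∨ A r c = 1)
    (hA : NuOrthoRows ν t A) (w : ι → ℤ)
    (hw : ∀ r, (2 ^ ν : ℤ) ∣ (∑ i, A r i * t i) - w r) (K K' : Finset ι) :
    (2 ^ ν : ℤ) ∣ (∑ i, (modTwoSum A K i * modTwoSum A K' i -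
        ((modTwoSum A K i + 1) % 2) * modTwoSum A K' i) * t i)
      - (2 * (∑ r ∈ K ∩ K', w r) - ∑ r ∈ K', w r) := by
  have h1 := norm_sum hν t A hA01 hA w hw K'
  have h2 := norm_sum hν t A hA01 hA w hw (K ∩ K')
  have h3 := inner_mts_sum hν t A hA K K'
  obtain ⟨μ, rfl⟩ : ∃ μ, ν = μ + 1 := ⟨ν - 1, by omega⟩
  simp only [Nat.add_sub_cancel] at h3
  have h4 := mul_dvd_mul_left (2 : ℤ) h3
  rw [← pow_succ'] at h4
  have h5 := dvd_sub (dvd_add h4 (h2.mul_left 2)) h1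
  refine dvd_conv h5 ?_
  have : (∑ i, (modTwoSum A K i * modTwoSum A K' i -
        ((modTwoSum A K i + 1) % 2) * modTwoSum A K' i) * t i) =
      2 * (∑ i, modTwoSum A K i * modTwoSum A K' i * t i) - ∑ i, modTwoSum A K' i * t i := by
    rw [Finset.mul_sum, ← Finset.sum_sub_distrib]
    refine Finset.sum_congr rfl fun i _ => ?_
    rw [xor_formula (mts_01 A K i) (Or.inr rfl)]; ring
  rw [this]; ring

/-- existence of the adjusted coefficient vector -/
lemma exists_tau {ν n : ℕ} (hν : 2 ≤ ν) (t : Fin n → ℤ) (ht : ∀ i, Odd (t i)) (m : ℤ)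
    (h : (2 ^ ν : ℤ) ∣ m - ∑ i, t i) (hn : n = 0 → m = 0) :
    ∃ τ : Fin n → ℤ, (∀ i, Odd (τ i)) ∧ (∀ i, (2 ^ ν : ℤ) ∣ τ i - t i) ∧ ∑ i, τ i = m := by
  rcases n with _ | n
  · exact ⟨t, ht, by simp, by simp [hn rfl]⟩
  · refine ⟨fun i => t i + if i = 0 then m - ∑ i, t i else 0, ?_, ?_, ?_⟩
    · intro i
      refine (ht i).add_even ?_
      split_ifs
      · exact even_iff_two_dvd.2 ((dvd_pow_self 2 (by omega)).trans h)
      · simp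
    · intro i
      by_cases hi : i = 0 <;> simp [hi]
      exact h
    · simp [Finset.sum_add_distrib]

lemma dvd_congr_sum {n : ℕ} (d : ℤ) (τ t f : Fin n → ℤ) (h : ∀ i, d ∣ τ i - t i) :
    d ∣ (∑ i, f i * τ i) - ∑ i, f i * t i := by
  rw [← Finset.sum_sub_distrib]
  refine Finset.dvd_sum fun i _ => ?_
  rw [← mul_sub]; exact (h i).mul_left _

section lift

variable {nout nc : ℕ} {na ra : Fin nc → ℕ}

def xval (L : (α : Fin nc) → Fin nout → Fin (na α) → ℤ)
    (K : Finset (Fin nout ⊕ Fin nc ⊕ (Σ α : Fin nc, Fin (ra α)))) (j : ℕ) (k : Fin nout) : ℤ :=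
  (if Sum.inl k ∈ K then 1 else 0) +
    ∑ β : Fin nc, if Sum.inr (Sum.inl β) ∈ K ∧ j ≤ β then Mmat L β k else 0

def xset (L : (α : Fin nc) → Fin nout → Fin (na α) → ℤ)
    (K : Finset (Fin nout ⊕ Fin nc ⊕ (Σ α : Fin nc, Fin (ra α)))) (j : ℕ) : Finset (Fin nout) :=
  Finset.univ.filter fun k => xval L K j k % 2 = 1

def pset (L : (α : Fin nc) → Fin nout → Fin (na α) → ℤ)
    (K : Finset (Fin nout ⊕ Fin nc ⊕ (Σ α : Fin nc, Fin (ra α)))) (α : Fin nc) :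
    Finset (Fin nout ⊕ Fin (ra α)) :=
  (xset L K (α + 1)).disjSum (Finset.univ.filter fun s => Sum.inr (Sum.inr ⟨α, s⟩) ∈ K)

lemma ite_emod (z : ℤ) : (if z % 2 = 1 then (1 : ℤ) else 0) = z % 2 := by
  split_ifs with h <;> omega

lemma cast_emod (z : ℤ) : ((z % 2 : ℤ) : ZMod 2) = z := by
  rw [ZMod.intCast_eq_intCast_iff']; simp

lemma lift_sum (L : (α : Fin nc) → Fin nout → Fin (na α) → ℤ)
    (S : (α : Fin nc) → Fin (ra α) → Fin (na α) → ℤ)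
    (K : Finset (Fin nout ⊕ Fin nc ⊕ (Σ α : Fin nc, Fin (ra α)))) (c : LiftCol nout nc na) :
    ∑ r ∈ K, liftMatrix L S r c = (∑ k, if Sum.inl k ∈ K then rowEll L k c else 0)
      + ((∑ β, if Sum.inr (Sum.inl β) ∈ K then rowOut L β c else 0)
      + ∑ β, ∑ s, if Sum.inr (Sum.inr ⟨β, s⟩) ∈ K then rowIn S β s c else 0) := by
  have : ∑ r ∈ K, liftMatrix L S r c = ∑ r, if r ∈ K then liftMatrix L S r c else 0 := by
    rw [← Finset.sum_filter]; simp
  rw [this, Fintype.sum_sum_type, Fintype.sum_sum_type, Fintype.sum_sigma]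
  rfl

lemma lift_inl (L : (α : Fin nc) → Fin nout → Fin (na α) → ℤ)
    (S : (α : Fin nc) → Fin (ra α) → Fin (na α) → ℤ)
    (K : Finset (Fin nout ⊕ Fin nc ⊕ (Σ α : Fin nc, Fin (ra α)))) (k : Fin nout) :
    modTwoSum (liftMatrix L S) K (Sum.inl k) = if k ∈ xset L K 0 then 1 else 0 := by
  simp only [xset, Finset.mem_filter, Finset.mem_univ, true_and]
  rw [ite_emod]
  unfold modTwoSum
  rw [lift_sum]
  congr 1
  unfold xval
  have h1 : (∑ k', if Sum.inl k' ∈ K then rowEll L k' (Sum.inl k) else 0) =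
      if Sum.inl k ∈ K then (1 : ℤ) else 0 := by
    rw [Finset.sum_eq_single k]
    · simp [rowEll]
    · intro b _ hb
      simp [rowEll, hb.symm]
    · simp
  rw [h1]
  simp [rowOut, rowIn]

lemma xset_cast (L : (α : Fin nc) → Fin nout → Fin (na α) → ℤ)
    (K : Finset (Fin nout ⊕ Fin nc ⊕ (Σ α : Fin nc, Fin (ra α)))) (j : ℕ)
    (f : Fin nout → ℤ) :
    ((∑ k ∈ xset L K j, f k : ℤ) : ZMod 2) = ∑ k, (xval L K j k : ZMod 2) * f k := by
  unfold xset
  rw [Finset.sum_filter, Int.cast_sum]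
  refine Finset.sum_congr rfl fun k _ => ?_
  rw [← cast_emod (xval L K j k)]
  rcases Int.emod_two_eq_zero_or_one (xval L K j k) with h | h <;> simp [h]

lemma lift_inr (L : (α : Fin nc) → Fin nout → Fin (na α) → ℤ)
    (S : (α : Fin nc) → Fin (ra α) → Fin (na α) → ℤ)
    (K : Finset (Fin nout ⊕ Fin nc ⊕ (Σ α : Fin nc, Fin (ra α)))) (α : Fin nc) (h : Bool)
    (i : Fin (na α)) :
    modTwoSum (liftMatrix L S) K (Sum.inr ⟨α, h, i⟩) =
      (modTwoSum (Sum.elim (L α) (S α)) (pset L K α) i +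
        if Sum.inr (Sum.inl α) ∈ K then (if h = false then 1 else 0) else 0) % 2 := by
  unfold modTwoSum
  rw [lift_sum]
  refine (ZMod.intCast_eq_intCast_iff' _ _ 2).1 ?_
  rw [Int.cast_add _ (ite _ _ _), cast_emod]
  unfold pset
  rw [Finset.sum_disjSum]
  simp only [Sum.elim_inl, Sum.elim_inr]
  have h3 : (∑ β, ∑ s, if Sum.inr (Sum.inr ⟨β, s⟩) ∈ K then
        rowIn S β s (Sum.inr ⟨α, h, i⟩ : LiftCol nout nc na) else 0) =
      ∑ s with Sum.inr (Sum.inr ⟨α, s⟩) ∈ K, S α s i := by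
    rw [Finset.sum_eq_single α]
    · rw [Finset.sum_filter]
      simp [rowIn]
    · intro β _ hb
      simp [rowIn, hb.symm]
    · simp
  have h2 : ((∑ β, if Sum.inr (Sum.inl β) ∈ K then
        rowOut L β (Sum.inr ⟨α, h, i⟩ : LiftCol nout nc na) else 0 : ℤ) : ZMod 2) =
      (∑ β, if Sum.inr (Sum.inl β) ∈ K ∧ (α : ℕ) + 1 ≤ β then
        ∑ k, (Mmat L β k : ZMod 2) * L α k i else 0) +
      ((if Sum.inr (Sum.inl α) ∈ K then (if h = false then 1 else 0) else 0 : ℤ) : ZMod 2) := by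
    have : ((if Sum.inr (Sum.inl α) ∈ K then (if h = false then 1 else 0) else 0 : ℤ) : ZMod 2) =
      ∑ β, if β = α then ((if Sum.inr (Sum.inl β) ∈ K then (if h = false then 1 else 0) else 0 : ℤ) : ZMod 2) else 0 := by
      simp
    rw [this, Int.cast_sum, ← Finset.sum_add_distrib]
    refine Finset.sum_congr rfl fun β _ => ?_
    by_cases hK : Sum.inr (Sum.inl β) ∈ K
    · rcases lt_trichotomy α β with hlt | rfl | hlt
      · have e : (α : ℕ) + 1 ≤ β := hlt
        simp only [hK, rowOut, hlt, e, hlt.ne', if_true, true_and, if_false]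
        rw [cast_emod]; push_cast; simp
      · simp [hK, rowOut]
      · have e : ¬ ((α : ℕ) + 1 ≤ β) := by have : (β : ℕ) < α := hlt; omega
        simp only [hK, rowOut, e, hlt.ne, hlt.ne', not_lt.2 hlt.le, if_true, and_false, if_false]
        simp
    · simp [hK]
  rw [h3, Int.cast_add, Int.cast_add, h2, Int.cast_add, xset_cast]
  have h1 : ∑ k, (xval L K (α + 1) k : ZMod 2) * (L α k i : ZMod 2) =
     ((∑ k, if Sum.inl k ∈ K then rowEll L k (Sum.inr ⟨α, h, i⟩ : LiftCol nout nc na) else 0 : ℤ) : ZMod 2)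
      + (∑ β, if Sum.inr (Sum.inl β) ∈ K ∧ (α : ℕ) + 1 ≤ β then
        ∑ k, (Mmat L β k : ZMod 2) * L α k i else 0) := by
    unfold xval
    push_cast
    simp only [add_mul, Finset.sum_add_distrib, Finset.sum_mul]
    congr 1
    · refine Finset.sum_congr rfl fun k _ => ?_
      split_ifs <;> simp [rowEll]
    · rw [Finset.sum_comm]
      refine Finset.sum_congr rfl fun β _ => ?_
      split_ifs <;> simp
  rw [h1]; ring

lemma xset_last (L : (α : Fin nc) → Fin nout → Fin (na α) → ℤ)
    (K : Finset (Fin nout ⊕ Fin nc ⊕ (Σ α : Fin nc, Fin (ra α)))) (k : Fin nout) :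
    k ∈ xset L K nc ↔ Sum.inl k ∈ K := by
  have : ∀ β : Fin nc, ¬ (nc ≤ (β : ℕ)) := fun β => not_le.2 β.2
  simp [xset, xval, this]
  split_ifs <;> simp [*]

lemma xval_succ (L : (α : Fin nc) → Fin nout → Fin (na α) → ℤ)
    (K : Finset (Fin nout ⊕ Fin nc ⊕ (Σ α : Fin nc, Fin (ra α)))) (α : Fin nc) (k : Fin nout) :
    xval L K α k = xval L K (α + 1) k + if Sum.inr (Sum.inl α) ∈ K then Mmat L α k else 0 := by
  have : (if Sum.inr (Sum.inl α) ∈ K then Mmat L α k else 0) = ∑ β,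
      if β = α then (if Sum.inr (Sum.inl β) ∈ K then Mmat L β k else 0) else 0 := by simp
  unfold xval
  rw [this, add_assoc, ← Finset.sum_add_distrib]
  congr 1
  refine Finset.sum_congr rfl fun β _ => ?_
  by_cases hK : Sum.inr (Sum.inl β) ∈ K
  · rcases lt_trichotomy α β with hlt | rfl | hlt
    · have e : (α : ℕ) + 1 ≤ β := hlt
      have e' : (α : ℕ) ≤ β := by omega
      simp [hK, e', hlt, hlt.ne']
    · simp [hK]
    · have e : ¬ ((α : ℕ) + 1 ≤ β) := by have : (β : ℕ) < α := hlt; omega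
      have e' : ¬ ((α : ℕ) ≤ β) := by have : (β : ℕ) < α := hlt; omega
      simp [hK, hlt.ne, not_le.2 hlt, not_lt.2 hlt.le]
  · simp [hK]

/-- 0/1 indicator of the partial sum. -/
def xb (L : (α : Fin nc) → Fin nout → Fin (na α) → ℤ)
    (K : Finset (Fin nout ⊕ Fin nc ⊕ (Σ α : Fin nc, Fin (ra α)))) (j : ℕ) (k : Fin nout) : ℤ :=
  if k ∈ xset L K j then 1 else 0

lemma xb_eq (L : (α : Fin nc) → Fin nout → Fin (na α) → ℤ)
    (K : Finset (Fin nout ⊕ Fin nc ⊕ (Σ α : Fin nc, Fin (ra α)))) (j : ℕ) (k : Fin nout) :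
    xb L K j k = xval L K j k % 2 := by
  simp only [xb, xset, Finset.mem_filter, Finset.mem_univ, true_and]
  rw [ite_emod]

lemma xb_01 (L : (α : Fin nc) → Fin nout → Fin (na α) → ℤ)
    (K : Finset (Fin nout ⊕ Fin nc ⊕ (Σ α : Fin nc, Fin (ra α)))) (j : ℕ) (k : Fin nout) :
    xb L K j k = 0 ∨ xb L K j k = 1 := by
  rw [xb_eq]; omega

lemma M_01 (L : (α : Fin nc) → Fin nout → Fin (na α) → ℤ) (α : Fin nc) (k : Fin nout) :
    Mmat L α k = 0 ∨ Mmat L α k = 1 := by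
  unfold Mmat; split_ifs <;> simp

lemma xb_succ_of_mem (L : (α : Fin nc) → Fin nout → Fin (na α) → ℤ)
    (K : Finset (Fin nout ⊕ Fin nc ⊕ (Σ α : Fin nc, Fin (ra α)))) (α : Fin nc)
    (hα : Sum.inr (Sum.inl α) ∈ K) (k : Fin nout) :
    xb L K α k = xb L K (α + 1) k + Mmat L α k - 2 * (xb L K (α + 1) k * Mmat L α k) := by
  rw [← xor_formula (xb_01 L K _ k) (M_01 L α k), xb_eq, xb_eq, xval_succ, if_pos hα]
  omega

lemma xb_succ_of_notMem (L : (α : Fin nc) → Fin nout → Fin (na α) → ℤ)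
    (K : Finset (Fin nout ⊕ Fin nc ⊕ (Σ α : Fin nc, Fin (ra α)))) (α : Fin nc)
    (hα : Sum.inr (Sum.inl α) ∉ K) (k : Fin nout) :
    xb L K α k = xb L K (α + 1) k := by
  rw [xb_eq, xb_eq, xval_succ, if_neg hα, add_zero]

/-- The weights (norms) of the rows of `G`. -/
def wt (L : (α : Fin nc) → Fin nout → Fin (na α) → ℤ) (α : Fin nc) : Fin nout ⊕ Fin (ra α) → ℤ :=
  Sum.elim (Mmat L α) (fun _ => 0)

lemma wt_pset (L : (α : Fin nc) → Fin nout → Fin (na α) → ℤ)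
    (K : Finset (Fin nout ⊕ Fin nc ⊕ (Σ α : Fin nc, Fin (ra α)))) (α : Fin nc) :
    ∑ r ∈ pset L K α, wt L α r = ∑ k, xb L K (α + 1) k * Mmat L α k := by
  unfold pset wt xb
  rw [Finset.sum_disjSum]
  simp

lemma wt_pset_inter (L : (α : Fin nc) → Fin nout → Fin (na α) → ℤ)
    (K K' : Finset (Fin nout ⊕ Fin nc ⊕ (Σ α : Fin nc, Fin (ra α)))) (α : Fin nc) :
    ∑ r ∈ pset L K α ∩ pset L K' α, wt L α r =
      ∑ k, xb L K (α + 1) k * xb L K' (α + 1) k * Mmat L α k := by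
  rw [← Finset.filter_mem_eq_inter, Finset.sum_filter]
  unfold pset wt xb
  rw [Finset.sum_disjSum]
  simp only [Finset.inl_mem_disjSum, Finset.inr_mem_disjSum, Sum.elim_inl, Sum.elim_inr]
  rw [← Finset.sum_filter]
  simp [Finset.sum_ite, Finset.filter_filter]
  rw [Finset.sum_filter]
  simp
  rw [Finset.inter_comm]

lemma step_lemma {ν : ℕ} (hν : 2 ≤ ν) (L : (α : Fin nc) → Fin nout → Fin (na α) → ℤ)
    (S : (α : Fin nc) → Fin (ra α) → Fin (na α) → ℤ) (α : Fin nc) (τ : Fin (na α) → ℤ)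
    (hA01 : ∀ r c, Sum.elim (L α) (S α) r c = 0 ∨ Sum.elim (L α) (S α) r c = 1)
    (hA : NuOrthoRows ν τ (Sum.elim (L α) (S α)))
    (hw : ∀ r, (2 ^ ν : ℤ) ∣ (∑ i, Sum.elim (L α) (S α) r i * τ i) - wt L α r)
    (K K' : Finset (Fin nout ⊕ Fin nc ⊕ (Σ α : Fin nc, Fin (ra α)))) (hK : Disjoint K K') :
    (2 ^ ν : ℤ) ∣ (∑ i, (modTwoSum (liftMatrix L S) K (Sum.inr ⟨α, true, i⟩) *
          modTwoSum (liftMatrix L S) K' (Sum.inr ⟨α, true, i⟩) -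
        modTwoSum (liftMatrix L S) K (Sum.inr ⟨α, false, i⟩) *
          modTwoSum (liftMatrix L S) K' (Sum.inr ⟨α, false, i⟩)) * τ i)
      - ((∑ k, xb L K (α + 1) k * xb L K' (α + 1) k) - ∑ k, xb L K α k * xb L K' α k) := by
  have hid : ∀ (P : Finset (Fin nout ⊕ Fin (ra α))) i,
      modTwoSum (Sum.elim (L α) (S α)) P i % 2 = modTwoSum (Sum.elim (L α) (S α)) P i := by
    intro P i; unfold modTwoSum; simp
  have main : ∀ (K K' : Finset (Fin nout ⊕ Fin nc ⊕ (Σ α : Fin nc, Fin (ra α)))),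
      Sum.inr (Sum.inl α) ∈ K → Sum.inr (Sum.inl α) ∉ K' →
      (2 ^ ν : ℤ) ∣ (∑ i, (modTwoSum (liftMatrix L S) K (Sum.inr ⟨α, true, i⟩) *
          modTwoSum (liftMatrix L S) K' (Sum.inr ⟨α, true, i⟩) -
        modTwoSum (liftMatrix L S) K (Sum.inr ⟨α, false, i⟩) *
          modTwoSum (liftMatrix L S) K' (Sum.inr ⟨α, false, i⟩)) * τ i)
      - ((∑ k, xb L K (α + 1) k * xb L K' (α + 1) k) - ∑ k, xb L K α k * xb L K' α k) := by
    intro K K' h h'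
    have hb := block_lemma hν τ _ hA01 hA (wt L α) hw (pset L K α) (pset L K' α)
    rw [wt_pset, wt_pset_inter] at hb
    simp only [lift_inr, h, h', if_true, if_false, add_zero, Bool.true_eq_false, hid]
    refine dvd_conv hb ?_
    congr 1
    rw [Finset.mul_sum, ← Finset.sum_sub_distrib, ← Finset.sum_sub_distrib]
    refine Finset.sum_congr rfl fun k _ => ?_
    rw [xb_succ_of_mem L K α h, xb_succ_of_notMem L K' α h']
    ring
  by_cases h : Sum.inr (Sum.inl α) ∈ K
  · exact main K K' h (Finset.disjoint_left.1 hK h)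
  · by_cases h' : Sum.inr (Sum.inl α) ∈ K'
    · have := main K' K h' h
      simpa only [mul_comm (modTwoSum (liftMatrix L S) K' _), mul_comm (xb L K' _ _)] using this
    · simp only [lift_inr, h, h', if_false, xb_succ_of_notMem L K α h,
        xb_succ_of_notMem L K' α h']
      simp

/-- The lifted coefficient vector. -/
def liftT (τ : (α : Fin nc) → Fin (na α) → ℤ) : LiftCol nout nc na → ℤ :=
  fun c => match c with
  | Sum.inl _ => 1
  | Sum.inr ⟨α, h, i⟩ => if h then τ α i else - τ α i

lemma sum_liftT (τ : (α : Fin nc) → Fin (na α) → ℤ) (f : LiftCol nout nc na → ℤ) :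
    ∑ c, f c * liftT τ c = (∑ k, f (Sum.inl k)) +
      ∑ α, ∑ i, (f (Sum.inr ⟨α, true, i⟩) - f (Sum.inr ⟨α, false, i⟩)) * τ α i := by
  rw [Fintype.sum_sum_type, Fintype.sum_sigma]
  congr 1
  · simp [liftT]
  · refine Finset.sum_congr rfl fun α _ => ?_
    rw [Fintype.sum_prod_type, Fintype.sum_bool, ← Finset.sum_add_distrib]
    refine Finset.sum_congr rfl fun i _ => ?_
    simp [liftT]; ring

end lift

/-- level lifting: given, for each `α`, a `(ν,t^{(α)})`-orthogonal
matrix `G^{(α)} = [L^{(α)}; S^{(α)}]` with `S^{(α)}` `𝔽₂`-independent and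
`(ν,t^{(α)})`-null, the nonzero rows of `L^{(α)}` `(ν,t^{(α)})`-orthonormal, and
`Σ_k Σᵢ L^{(α)}_{ki} t^{(α)}ᵢ ≡ Σᵢ t^{(α)}ᵢ (mod 2^ν)`, there exists an odd
coefficient vector `t` such that the rows of the lifted matrix `𝔠` form a
`(ν+1,t)`-orthogonal set, the rows `𝔠_ℓ` are `(ν+1,t)`-orthonormal, the rows
`𝔠_out` and `𝔠_in` are `(ν+1,t)`-null, and
`Σ_k Σᵢ (𝔠_ℓ)_{ki} tᵢ ≡ Σᵢ tᵢ (mod 2^{ν+1})`. -/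
theorem stmt_8 (ν nout nc : ℕ) (hν : 2 ≤ ν) (hnout : 1 ≤ nout) (hnc : 1 ≤ nc)
    (na ra : Fin nc → ℕ)
    (L : (α : Fin nc) → Fin nout → Fin (na α) → ℤ)
    (S : (α : Fin nc) → Fin (ra α) → Fin (na α) → ℤ)
    (t : (α : Fin nc) → Fin (na α) → ℤ)
    (hL01 : ∀ α k i, L α k i = 0 ∨ L α k i = 1)
    (hS01 : ∀ α s i, S α s i = 0 ∨ S α s i = 1)
    (ht : ∀ α i, Odd (t α i))
    (hG : ∀ α, NuOrthoRows ν (t α) (Sum.elim (L α) (S α)))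
    (hSind : ∀ α, RowsLinIndepF2 (S α))
    (hSnull : ∀ α s, (2 ^ ν : ℤ) ∣ ∑ i, S α s i * t α i)
    (hLorth : ∀ α, NuOrthoRows ν (t α) (fun p : {k : Fin nout // L α k ≠ 0} => L α p.1))
    (hLnorm : ∀ α k, L α k ≠ 0 → (2 ^ ν : ℤ) ∣ ((∑ i, L α k i * t α i) - 1))
    (hLt : ∀ α, (2 ^ ν : ℤ) ∣ ((∑ k, ∑ i, L α k i * t α i) - ∑ i, t α i)) :
    ∃ t' : LiftCol nout nc na → ℤ,
      (∀ c, Odd (t' c)) ∧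
      NuOrthoRows (ν + 1) t' (liftMatrix L S) ∧
      (∀ k, (2 ^ (ν + 1) : ℤ) ∣ ((∑ c, rowEll L k c * t' c) - 1)) ∧
      (∀ α, (2 ^ (ν + 1) : ℤ) ∣ ∑ c, rowOut L α c * t' c) ∧
      (∀ α s, (2 ^ (ν + 1) : ℤ) ∣ ∑ c, rowIn S α s c * t' c) ∧
      (2 ^ (ν + 1) : ℤ) ∣ ((∑ k, ∑ c, rowEll L k c * t' c) - ∑ c, t' c) := by
  classical
  have hM : ∀ α, (2 ^ ν : ℤ) ∣ (∑ k, Mmat L α k) - ∑ i, t α i := by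
    intro α
    have h1 : (2 ^ ν : ℤ) ∣ (∑ k, ∑ i, L α k i * t α i) - ∑ k, Mmat L α k := by
      rw [← Finset.sum_sub_distrib]
      refine Finset.dvd_sum fun k _ => ?_
      by_cases h : L α k = 0
      · simp [h, Mmat]
      · simpa [h, Mmat] using hLnorm α k h
    have := dvd_sub (hLt α) h1
    refine dvd_conv this ?_; ring
  have hn0 : ∀ α, na α = 0 → (∑ k, Mmat L α k) = 0 := by
    intro α h0
    refine Finset.sum_eq_zero fun k _ => ?_
    have : L α k = 0 := by
      funext i
      exact absurd i.2 (by omega)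
    simp [Mmat, this]
  choose τ hodd hτ hsum using fun α => exists_tau hν (t α) (ht α) _ (hM α) (hn0 α)
  have hA01 : ∀ α r c, Sum.elim (L α) (S α) r c = 0 ∨ Sum.elim (L α) (S α) r c = 1 := by
    rintro α (k | s) c
    · exact hL01 α k c
    · exact hS01 α s c
  have hA : ∀ α, NuOrthoRows ν (τ α) (Sum.elim (L α) (S α)) := by
    intro α K K' hK
    have h1 := hG α K K' hK
    have h2 := dvd_congr_sum (2 ^ ν) (τ α) (t α)
      (fun i => modTwoSum (Sum.elim (L α) (S α)) K i * modTwoSum (Sum.elim (L α) (S α)) K' i) (hτ α)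
    unfold NuOrthoVec at h1 ⊢
    have h3 := dvd_add ((pow_dvd_pow (2 : ℤ) (Nat.sub_le ν 1)).trans h2) h1
    simpa using h3
  have hw : ∀ α r, (2 ^ ν : ℤ) ∣ (∑ i, Sum.elim (L α) (S α) r i * τ α i) - wt L α r := by
    rintro α (k | s)
    · have h2 := dvd_congr_sum (2 ^ ν) (τ α) (t α) (L α k) (hτ α)
      by_cases h : L α k = 0
      · simp [h, wt, Mmat]
      · have := dvd_add h2 (hLnorm α k h)
        simpa [wt, Mmat, h] using this
    · have h2 := dvd_congr_sum (2 ^ ν) (τ α) (t α) (S α s) (hτ α)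
      have := dvd_add h2 (hSnull α s)
      simpa [wt] using this
  have hell : ∀ k, ∑ c, rowEll L k c * liftT τ c = 1 := by
    intro k
    rw [sum_liftT]
    simp [rowEll]
  refine ⟨liftT τ, ?_, ?_, ?_, ?_, ?_, ?_⟩
  · rintro (k | ⟨α, h, i⟩)
    · simp [liftT]
    · cases h <;> simp [liftT, hodd α i]
  · intro K K' hK
    unfold NuOrthoVec
    rw [sum_liftT, Nat.add_sub_cancel]
    have hs := Finset.dvd_sum fun α (_ : α ∈ Finset.univ) =>
      step_lemma hν L S α (τ α) (hA01 α) (hA α) (hw α) K K' hK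
    rw [Finset.sum_sub_distrib] at hs
    have htel : ∑ α : Fin nc, ((∑ k, xb L K (α + 1) k * xb L K' (α + 1) k)
        - ∑ k, xb L K α k * xb L K' α k) = - ∑ k, xb L K 0 k * xb L K' 0 k := by
      rw [Fin.sum_univ_eq_sum_range (fun j => (∑ k, xb L K (j + 1) k * xb L K' (j + 1) k)
        - ∑ k, xb L K j k * xb L K' j k) nc,
        Finset.sum_range_sub (fun j => ∑ k, xb L K j k * xb L K' j k)]
      have : ∑ k, xb L K nc k * xb L K' nc k = 0 := by
        refine Finset.sum_eq_zero fun k _ => ?_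
        unfold xb
        simp only [xset_last]
        by_cases h : Sum.inl k ∈ K
        · simp [Finset.disjoint_left.1 hK h]
        · simp [h]
      rw [this, zero_sub]
    rw [htel] at hs
    simp only [lift_inl]
    refine dvd_conv hs ?_
    rw [sub_neg_eq_add, add_comm]
    rfl
  · intro k
    simp [hell]
  · intro α
    rw [sum_liftT, Finset.sum_eq_single α]
    · simp [rowOut, hsum]
    · intro β _ hb
      simp [rowOut, hb]
    · simp
  · intro α s
    rw [sum_liftT]
    simp [rowIn]
  · have h1 := sum_liftT (nout := nout) τ (fun _ => 1)
    simp only [one_mul] at h1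
    rw [h1]
    simp [hell]
end

section
/- Let ν ≥ 2 be an integer, t a coefficient vector of length n, L a k×n binary matrix, and S an r×n binary matrix, such that the rows of the stacked matrix [L; S] form a (ν,t)-orthogonal set, the rows of L are (ν,t)-orthonormal, and the rows of S are (ν,t)-null. Then for every x ∈ {0,1}^k and every s in the 𝔽₂-row span of S, the binary vector f := s + Σ_{j=1}^k x_j L_{j*} (mod 2) satisfies ‖f‖_{ν,t} ≡ Σ_{j=1}^k x_j (mod 2^ν). -/
open Finset

theorem norm_modTwoSum {ι κ : Type*} [Fintype κ] [DecidableEq ι] (ν : ℕ) (hν : 2 ≤ ν)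
    (t : κ → ℤ) (A : ι → κ → ℤ) (hA : ∀ j i, A j i = 0 ∨ A j i = 1)
    (hG : NuOrthoRows ν t A) (c : ι → ℤ)
    (hc : ∀ j, (2 ^ ν : ℤ) ∣ ((∑ i, A j i * t i) - c j)) (K : Finset ι) :
    (2 ^ ν : ℤ) ∣ ((∑ i, modTwoSum A K i * t i) - ∑ j ∈ K, c j) := by
  induction K using Finset.induction_on with
  | empty => simp [modTwoSum]
  | insert a K ha ih =>
    have h1 : ∀ i, modTwoSum A (insert a K) i
        = A a i + modTwoSum A K i - 2 * (modTwoSum A {a} i * modTwoSum A K i) := by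
      intro i
      simp only [modTwoSum, Finset.sum_insert ha, Finset.sum_singleton]
      generalize (∑ r ∈ K, A r i) = m
      rcases hA a i with h | h <;> rw [h]
      · simp
      · norm_num
        omega
    obtain ⟨q, hq⟩ := hG {a} K (by simpa using ha)
    have hp : (2 ^ ν : ℤ) = 2 * 2 ^ (ν - 1) := by
      rw [← pow_succ']
      congr 1
      omega
    have h2 : (∑ i, modTwoSum A (insert a K) i * t i) = (∑ i, A a i * t i)
        + (∑ i, modTwoSum A K i * t i)
        - 2 * ∑ i, modTwoSum A {a} i * modTwoSum A K i * t i := by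
      rw [Finset.mul_sum, ← Finset.sum_add_distrib, ← Finset.sum_sub_distrib]
      refine Finset.sum_congr rfl fun i _ => ?_
      rw [h1]
      ring
    obtain ⟨u, hu⟩ := hc a
    obtain ⟨v, hv⟩ := ih
    rw [h2, hq, Finset.sum_insert ha]
    refine ⟨u + v - q, ?_⟩
    linear_combination hu + hv + q * hp

/-- Let the rows of `[L; S]` form a `(ν,t)`-orthogonal set, with the rows
of `L` `(ν,t)`-orthonormal and the rows of `S` `(ν,t)`-null. Then for every binary
`x ∈ {0,1}^k` and every `s` in the `𝔽₂`-row span of `S` (i.e. `s = Σ_{a∈J} S_{a*} mod 2`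
for some subset `J` of rows of `S`), the binary vector
`f := s + Σ_j x_j L_{j*} (mod 2)` satisfies `‖f‖_{ν,t} ≡ Σ_j x_j (mod 2^ν)`. -/
theorem stmt_11 (ν n k r : ℕ) (hν : 2 ≤ ν)
    (t : Fin n → ℤ) (ht : ∀ i, Odd (t i))
    (L : Fin k → Fin n → ℤ) (hL01 : ∀ j i, L j i = 0 ∨ L j i = 1)
    (S : Fin r → Fin n → ℤ) (hS01 : ∀ a i, S a i = 0 ∨ S a i = 1)
    (hG : NuOrthoRows ν t (Sum.elim L S))
    (hLnorm : ∀ j, (2 ^ ν : ℤ) ∣ ((∑ i, L j i * t i) - 1))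
    (hSnull : ∀ a, (2 ^ ν : ℤ) ∣ ∑ i, S a i * t i)
    (x : Fin k → ℤ) (hx01 : ∀ j, x j = 0 ∨ x j = 1)
    (J : Finset (Fin r)) :
    (2 ^ ν : ℤ) ∣
      ((∑ i, ((modTwoSum S J i + ∑ j, x j * L j i) % 2) * t i) - ∑ j, x j) := by
  have key := norm_modTwoSum ν hν t (Sum.elim L S)
    (by rintro (j | a) i <;> simp [hL01, hS01]) hG (Sum.elim (fun _ => 1) (fun _ => 0))
    (by rintro (j | a) <;> simp [hLnorm, hSnull])
    ((Finset.univ.filter (fun j => x j = 1)).disjSum J)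
  have hx : ∀ y : Fin k → ℤ, ∑ j, x j * y j = ∑ j ∈ Finset.univ.filter (fun j => x j = 1), y j := by
    intro y
    rw [Finset.sum_filter]
    refine Finset.sum_congr rfl fun j _ => ?_
    rcases hx01 j with h | h <;> simp [h]
  have h1 := hx (fun _ => 1)
  simp only [mul_one] at h1
  rw [h1]
  simp only [modTwoSum, Finset.sum_disjSum, Sum.elim_inl, Sum.elim_inr, Finset.sum_const_zero,
    add_zero] at key
  convert key using 4 with i
  simp only [modTwoSum]
  rw [hx (fun j => L j i)]
  omega
end

section
/- Let t be a coefficient vector of length n and let G be a binary matrix with n columns whose rows form a (3,t)-orthogonal set. Then G is triorthogonal: for any two distinct rows a ≠ b, Σᵢ G_{ai} G_{bi} ≡ 0 (mod 2), and for any three pairwise distinct rows a, b, c, Σᵢ G_{ai} G_{bi} G_{ci} ≡ 0 (mod 2). -/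
open Finset

/-- If the rows of a binary matrix `G` form a `(3,t)`-orthogonal set for
some coefficient vector `t` (all entries odd), then `G` is triorthogonal: any two
distinct rows have even overlap, and any three pairwise distinct rows have even
overlap. -/
theorem stmt_14 (n m : ℕ)
    (t : Fin n → ℤ) (ht : ∀ i, Odd (t i))
    (G : Fin m → Fin n → ℤ) (hG01 : ∀ a i, G a i = 0 ∨ G a i = 1)
    (horth : NuOrthoRows 3 t G) :
    (∀ a b : Fin m, a ≠ b → (2 : ℤ) ∣ ∑ i, G a i * G b i) ∧
    (∀ a b c : Fin m, a ≠ b → a ≠ c → b ≠ c →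
      (2 : ℤ) ∣ ∑ i, G a i * G b i * G c i) := by
  have parity : ∀ f : Fin n → ℤ, (2 : ℤ) ∣ ∑ i, f i * t i → (2 : ℤ) ∣ ∑ i, f i := by
    intro f hf
    have h : (2 : ℤ) ∣ ∑ i, (f i * t i - f i) := by
      apply Finset.dvd_sum
      intro i _
      obtain ⟨k, hk⟩ := ht i
      exact ⟨f i * k, by rw [hk]; ring⟩
    rw [Finset.sum_sub_distrib] at h
    omega
  have hmod : ∀ a i, G a i % 2 = G a i := by
    intro a i
    rcases hG01 a i with h | h <;> rw [h] <;> rfl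
  have pair : ∀ a b : Fin m, a ≠ b → (4 : ℤ) ∣ ∑ i, G a i * G b i * t i := by
    intro a b hab
    have h := horth {a} {b} (by simpa using hab)
    simpa [NuOrthoVec, modTwoSum, hmod] using h
  refine ⟨?_, ?_⟩
  · intro a b hab
    apply parity
    have := pair a b hab
    omega
  · intro a b c hab hac hbc
    apply parity
    have h1 := pair a b hab
    have h2 := pair a c hac
    have h := horth {a} {b, c} (by simp [hab, hac])
    have key : ∀ i, (G b i + G c i) % 2 = G b i + G c i - 2 * (G b i * G c i) := by
      intro i
      rcases hG01 b i with h | h <;> rcases hG01 c i with h' | h' <;> rw [h, h'] <;> rfl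
    have h3 : (4 : ℤ) ∣ ∑ i, G a i * ((G b i + G c i) % 2) * t i := by
      simpa [NuOrthoVec, modTwoSum, hmod, Finset.sum_pair hbc] using h
    have e : ∑ i, G a i * ((G b i + G c i) % 2) * t i
        = ∑ i, G a i * G b i * t i + ∑ i, G a i * G c i * t i
          - 2 * ∑ i, G a i * G b i * G c i * t i := by
      rw [Finset.mul_sum, ← Finset.sum_add_distrib, ← Finset.sum_sub_distrib]
      apply Finset.sum_congr rfl
      intro i _
      rw [key]
      ring
    omega
end

section
/- Let k ≥ 2 be an even integer and consider the (k+3) × (3k+8) binary matrix G whose columns are grouped into five blocks of sizes 4, 4, k, k, k, with rows: for j = 1,…,k, the row L_j = (0 0 0 0 | 1 1 1 1 | e_j | e_j | e_j) where e_j is the j-th standard basis vector of length k; and three further rows S_1 = (0 0 1 1 | 0 0 1 1 | 1⃗ | 0⃗ | 1⃗), S_2 = (1 0 1 0 | 1 0 1 0 | 0⃗ | 1⃗ | 1⃗), S_3 = (1 1 1 1 | 1 1 1 1 | 0⃗ | 0⃗ | 0⃗), where 1⃗ and 0⃗ are the all-ones and all-zeros vectors of length k. Then there exists a coefficient vector t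 ∈ ℤ^{3k+8} (all entries odd) such that the rows of G form a (3,t)-orthogonal set, the rows L_1,…,L_k are (3,t)-orthonormal, and the rows S_1, S_2, S_3 are (3,t)-null. -/
open Finset

/-- Column index type for the `[[3k+8, k, 2]]` triorthogonal matrix: five blocks of
sizes `4, 4, k, k, k`. -/
abbrev Col15 (k : ℕ) := Fin 4 ⊕ Fin 4 ⊕ Fin k ⊕ Fin k ⊕ Fin k

/-- The `j`-th standard basis vector of length `k` (as a `{0,1}` integer vector). -/
def eVec (k : ℕ) (j : Fin k) : Fin k → ℤ := fun i => if i = j then 1 else 0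

/-- Row `L_j = (0 0 0 0 | 1 1 1 1 | e_j | e_j | e_j)`. -/
def Lrow15 (k : ℕ) (j : Fin k) : Col15 k → ℤ :=
  Sum.elim (fun _ => 0)
    (Sum.elim (fun _ => 1)
      (Sum.elim (eVec k j) (Sum.elim (eVec k j) (eVec k j))))

/-- Row `S_1 = (0 0 1 1 | 0 0 1 1 | 1⃗ | 0⃗ | 1⃗)`. -/
def S1row (k : ℕ) : Col15 k → ℤ :=
  Sum.elim (fun i => if 2 ≤ i.val then 1 else 0)
    (Sum.elim (fun i => if 2 ≤ i.val then 1 else 0)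
      (Sum.elim (fun _ => 1) (Sum.elim (fun _ => 0) (fun _ => 1))))

/-- Row `S_2 = (1 0 1 0 | 1 0 1 0 | 0⃗ | 1⃗ | 1⃗)`. -/
def S2row (k : ℕ) : Col15 k → ℤ :=
  Sum.elim (fun i => if i.val % 2 = 0 then 1 else 0)
    (Sum.elim (fun i => if i.val % 2 = 0 then 1 else 0)
      (Sum.elim (fun _ => 0) (Sum.elim (fun _ => 1) (fun _ => 1))))

/-- Row `S_3 = (1 1 1 1 | 1 1 1 1 | 0⃗ | 0⃗ | 0⃗)`. -/
def S3row (k : ℕ) : Col15 k → ℤ :=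
  Sum.elim (fun _ => 1) (Sum.elim (fun _ => 1) (fun _ => 0))


/-- 0/1 membership indicator. -/
def ind15 {α : Type*} [DecidableEq α] (K : Finset α) (a : α) : ℤ := if a ∈ K then 1 else 0

lemma ind15_cases {α : Type*} [DecidableEq α] (K K' : Finset α) (h : Disjoint K K') (a : α) :
    (ind15 K a = 0 ∧ ind15 K' a = 0) ∨ (ind15 K a = 1 ∧ ind15 K' a = 0) ∨
      (ind15 K a = 0 ∧ ind15 K' a = 1) := by
  unfold ind15
  by_cases h1 : a ∈ K
  · have := Finset.disjoint_left.mp h h1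
    simp [h1, this]
  · by_cases h2 : a ∈ K' <;> simp [h1, h2]

lemma modTwoSum_eq15 (k : ℕ) (K : Finset (Fin k ⊕ Fin 3)) (c : Col15 k) :
    modTwoSum (Sum.elim (Lrow15 k) ![S1row k, S2row k, S3row k]) K c =
      (∑ j, ind15 K (Sum.inl j) * Lrow15 k j c + (ind15 K (Sum.inr 0) * S1row k c +
        ind15 K (Sum.inr 1) * S2row k c + ind15 K (Sum.inr 2) * S3row k c)) % 2 := by
  unfold modTwoSum
  congr 1
  rw [← Finset.univ_inter K, ← Finset.sum_ite_mem]
  rw [Fintype.sum_sum_type, Fin.sum_univ_three]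
  simp [ind15]

lemma sum_cases15 (k : ℕ) (x x' : Fin k → ℤ)
    (h : ∀ j, (x j = 0 ∧ x' j = 0) ∨ (x j = 1 ∧ x' j = 0) ∨ (x j = 0 ∧ x' j = 1))
    (F : ℤ → ℤ → ℤ) :
    ∑ j, F (x j) (x' j) = F 0 0 * k + (F 1 0 - F 0 0) * ∑ j, x j + (F 0 1 - F 0 0) * ∑ j, x' j := by
  have : ∀ j, F (x j) (x' j) = F 0 0 + (F 1 0 - F 0 0) * x j + (F 0 1 - F 0 0) * x' j := by
    intro j
    rcases h j with ⟨a, b⟩ | ⟨a, b⟩ | ⟨a, b⟩ <;> rw [a, b] <;> ring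
  rw [Finset.sum_congr rfl (fun j _ => this j)]
  simp [Finset.sum_add_distrib, Finset.mul_sum]
  ring

/-- The coefficient vector. -/
def t15 (k : ℕ) : Col15 k → ℤ :=
  Sum.elim ![-(1 + k), 1 + k, 1 + k, -(1 + k)]
    (Sum.elim ![1, -1, -1, 1] (Sum.elim (fun _ => 1) (Sum.elim (fun _ => 1) (fun _ => -1))))

lemma arith15 (k m m' a b c a' b' c' : ℤ) (hk : k % 2 = 0)
    (ha : (a = 0 ∧ a' = 0) ∨ (a = 1 ∧ a' = 0) ∨ (a = 0 ∧ a' = 1))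
    (hb : (b = 0 ∧ b' = 0) ∨ (b = 1 ∧ b' = 0) ∨ (b = 0 ∧ b' = 1))
    (hc : (c = 0 ∧ c' = 0) ∨ (c = 1 ∧ c' = 0) ∨ (c = 0 ∧ c' = 1))
    (F : ℤ → ℤ → ℤ)
    (hF : F = fun x x' => (x + a) % 2 * ((x' + a') % 2) + (x + b) % 2 * ((x' + b') % 2)
      - (x + (a + b)) % 2 * ((x' + (a' + b')) % 2))
    (T : ℤ) (hT : T = F 0 0 * k + (F 1 0 - F 0 0) * m + (F 0 1 - F 0 0) * m') :
    (4 : ℤ) ∣ (-((b + c) % 2 * ((b' + c') % 2) * (1 + k)) + c % 2 * (c' % 2) * (1 + k)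
      + (a + b + c) % 2 * ((a' + b' + c') % 2) * (1 + k)
      - (a + c) % 2 * ((a' + c') % 2) * (1 + k))
      + ((m + (b + c)) % 2 * ((m' + (b' + c')) % 2) - (m + c) % 2 * ((m' + c') % 2)
      - (m + (a + b + c)) % 2 * ((m' + (a' + b' + c')) % 2)
      + (m + (a + c)) % 2 * ((m' + (a' + c')) % 2))
      + T := by
  subst hT
  subst hF
  rcases Int.emod_two_eq_zero_or_one m with hm | hm <;>
  rcases Int.emod_two_eq_zero_or_one m' with hm' | hm' <;>
  rcases ha with ⟨rfl, rfl⟩ | ⟨rfl, rfl⟩ | ⟨rfl, rfl⟩ <;>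
  rcases hb with ⟨rfl, rfl⟩ | ⟨rfl, rfl⟩ | ⟨rfl, rfl⟩ <;>
  rcases hc with ⟨rfl, rfl⟩ | ⟨rfl, rfl⟩ | ⟨rfl, rfl⟩ <;>
  norm_num [Int.add_emod, hm, hm'] <;> omega

lemma ortho15 (k : ℕ) (hke : Even k) :
    NuOrthoRows 3 (t15 k) (Sum.elim (Lrow15 k) ![S1row k, S2row k, S3row k]) := by
  intro K K' hd
  unfold NuOrthoVec
  have hkz : (k : ℤ) % 2 = 0 := by
    obtain ⟨r, rfl⟩ := hke
    omega
  obtain ⟨F, hF⟩ : ∃ F : ℤ → ℤ → ℤ, F = fun x x' =>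
      (x + ind15 K (Sum.inr 0)) % 2 * ((x' + ind15 K' (Sum.inr 0)) % 2)
      + (x + ind15 K (Sum.inr 1)) % 2 * ((x' + ind15 K' (Sum.inr 1)) % 2)
      - (x + (ind15 K (Sum.inr 0) + ind15 K (Sum.inr 1))) % 2 *
        ((x' + (ind15 K' (Sum.inr 0) + ind15 K' (Sum.inr 1))) % 2) := ⟨_, rfl⟩
  have key := arith15 k (∑ j, ind15 K (Sum.inl j)) (∑ j, ind15 K' (Sum.inl j)) _ _ _ _ _ _ hkz
    (ind15_cases K K' hd (Sum.inr 0)) (ind15_cases K K' hd (Sum.inr 1))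
    (ind15_cases K K' hd (Sum.inr 2)) F hF _
    (sum_cases15 k _ _ (fun j => ind15_cases K K' hd (Sum.inl j)) F)
  subst hF
  simp only [Finset.sum_sub_distrib, Finset.sum_add_distrib] at key
  norm_num
  convert key using 1
  simp only [modTwoSum_eq15]
  simp [Fintype.sum_sum_type, Fin.sum_univ_four, t15, Lrow15, S1row, S2row, S3row, eVec]
  ring

/-- For every even `k ≥ 2`, the `(k+3) × (3k+8)` binary matrix `G` with
rows `L_1, …, L_k, S_1, S_2, S_3` as above admits a coefficient vector `t` (all
entries odd) making the rows of `G` a `(3,t)`-orthogonal set, the rows `L_j`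
`(3,t)`-orthonormal, and the rows `S_1, S_2, S_3` `(3,t)`-null. -/
theorem stmt_15 (k : ℕ) (hk : 2 ≤ k) (hke : Even k) :
    ∃ t : Col15 k → ℤ,
      (∀ c, Odd (t c)) ∧
      NuOrthoRows 3 t (Sum.elim (Lrow15 k) ![S1row k, S2row k, S3row k]) ∧
      (∀ j : Fin k, (2 ^ 3 : ℤ) ∣ ((∑ c, Lrow15 k j c * t c) - 1)) ∧
      (∀ s : Fin 3, (2 ^ 3 : ℤ) ∣ ∑ c, (![S1row k, S2row k, S3row k]) s c * t c) := by
  refine ⟨t15 k, ?_, ortho15 k hke, ?_, ?_⟩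
  · have hkz : (k : ℤ) % 2 = 0 := by
      obtain ⟨r, rfl⟩ := hke
      omega
    rintro (i | i | i | i | i)
    · fin_cases i <;> simp [t15, Int.odd_iff] <;> omega
    · fin_cases i <;> simp [t15, Int.odd_iff]
    all_goals simp [t15, Int.odd_iff]
  · intro j
    simp [Fintype.sum_sum_type, Fin.sum_univ_four, t15, Lrow15, eVec]
  · intro s
    fin_cases s <;>
      simp [Fintype.sum_sum_type, Fin.sum_univ_four, t15, S1row, S2row, S3row]
end
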